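/- For each (α, β) ∈ {(0,22), (6,16), (12,10)}, the complete 4-partite graph K_4[15] (minus a 1-factor) admits a decomposition into α C_3-factors and β C_5-factors. -/

import Mathlib

open SimpleGraph

/-- A `C_k`-factor: a spanning 2-regular subgraph all of whose connected
components (necessarily cycles) have exactly `k` vertices. -/
def IsCycleFactor {V : Type*} (H : SimpleGraph V) (k : ℕ) : Prop :=
  (∀ v : V, (H.neighborSet v).ncard = 2) ∧
  (∀ v : V, (H.connectedComponentMk v).supp.ncard = k)

/-- A 1-factor (perfect matching): every vertex has exactly one neighbour. -/
def IsOneFactor {V : Type*} (H : SimpleGraph V) : Prop :=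
  ∀ v : V, (H.neighborSet v).ncard = 1

/-- `F 0, …, F (N-1)` partitions the edge set of `G`. -/
def IsDecompOn {V : Type*} (G : SimpleGraph V) (F : ℕ → SimpleGraph V) (N : ℕ) : Prop :=
  (∀ i < N, F i ≤ G) ∧
  (∀ i < N, ∀ j < N, i ≠ j → Disjoint (F i).edgeSet (F j).edgeSet) ∧
  G.edgeSet = ⋃ i ∈ Set.Iio N, (F i).edgeSet

/-- A Hamilton–Waterloo decomposition of a graph `G` into `α` `C_m`-factors
and `β` `C_n`-factors. -/
def IsHWGraph {V : Type*} (G : SimpleGraph V) (m n α β : ℕ) : Prop :=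
  ∃ F : ℕ → SimpleGraph V, IsDecompOn G F (α + β) ∧
    (∀ i < α, IsCycleFactor (F i) m) ∧
    (∀ i, α ≤ i → i < α + β → IsCycleFactor (F i) n)

/-- `HW v m n α β`: a partition of `E(K_v)` (for `v` odd) or of `E(K_v)` minus a
perfect matching (for `v` even) into `α` `C_m`-factors and `β` `C_n`-factors. -/
def HW (v m n α β : ℕ) : Prop :=
  ∃ I : SimpleGraph (Fin v),
    (Odd v → I = ⊥) ∧ (Even v → IsOneFactor I) ∧
    IsHWGraph ((⊤ : SimpleGraph (Fin v)) \ I) m n α β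

/-- The complete `u`-partite graph with parts of size `g`. -/
def Kpartite (u g : ℕ) : SimpleGraph (Fin u × Fin g) :=
  SimpleGraph.fromRel (fun a b => a.1 ≠ b.1)

/-- The Cayley graph on an additive group with connection set `S`. -/
def cayley (Γ : Type*) [AddGroup Γ] (S : Set Γ) : SimpleGraph Γ :=
  SimpleGraph.fromRel (fun a b => a - b ∈ S)

/-- `HW(K_u[g]; m, n, α, β)`: a partition of `E(K_u[g])` (minus a 1-factor when
`g (u - 1)` is odd) into `α` `C_m`-factors and `β` `C_n`-factors. -/
def HWMultipartite (u g m n α β : ℕ) : Prop :=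
  ∃ I : SimpleGraph (Fin u × Fin g),
    (¬ Odd (g * (u - 1)) → I = ⊥) ∧ (Odd (g * (u - 1)) → IsOneFactor I) ∧
    IsHWGraph (Kpartite u g \ I) m n α β

/-!
Label the vertices of `K_4[15]` by `ℤ/60`, the parts being the classes modulo 4. Removing the
1-factor of difference 30 leaves the Cayley graph whose differences are those not divisible by 4
and different from 30: 22 differences up to sign. Split them into two hexads and two pentads.
By Bose's method of differences, base cycles whose vertices represent every class modulo `s`
once sweep out a 2-factor when translated by a class modulo `s`, and the translates by several such
classes factor the Cayley graph of a set of differences as soon as they use each difference once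
from every class. Each hexad admits base cycles of both lengths, so it yields six triangle factors
or six pentagon factors, at choice; the two pentads together yield ten pentagon factors.
-/

section CycleFactors

variable {V W : Type*} {G : SimpleGraph V} {H : SimpleGraph W} {k : ℕ}

theorem ncard_neighborSet_of_iso (φ : G ≃g H) (v : V) :
    (H.neighborSet (φ v)).ncard = (G.neighborSet v).ncard :=
  (Nat.card_congr (φ.mapNeighborSet v)).symm

theorem IsOneFactor.of_iso (hG : IsOneFactor G) (φ : G ≃g H) : IsOneFactor H := by
  intro w
  obtain ⟨v, rfl⟩ := φ.surjective w
  exact (ncard_neighborSet_of_iso φ v).trans (hG v)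

theorem IsCycleFactor.of_iso (hG : IsCycleFactor G k) (φ : G ≃g H) : IsCycleFactor H k := by
  refine ⟨fun w => ?_, fun w => ?_⟩ <;> obtain ⟨v, rfl⟩ := φ.surjective w
  · exact (ncard_neighborSet_of_iso φ v).trans (hG.1 v)
  · have hsupp := Nat.card_congr
      (ConnectedComponent.isoEquivSupp φ (G.connectedComponentMk v))
    exact hsupp.symm.trans (hG.2 v)

theorem isCycleFactor_cycleGraph (hk : 3 ≤ k) : IsCycleFactor (cycleGraph k) k := by
  obtain ⟨n, rfl⟩ := Nat.exists_eq_add_of_le' hk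
  refine ⟨fun v => ?_, fun v => ?_⟩
  · rw [Set.ncard_eq_toFinset_card', ← neighborFinset_def, card_neighborFinset_eq_degree,
      cycleGraph_degree_three_le]
  · have hsupp : ((cycleGraph (n + 3)).connectedComponentMk v).supp = Set.univ :=
      Set.eq_univ_of_forall fun w => ConnectedComponent.sound (cycleGraph_preconnected w v)
    rw [hsupp, Set.ncard_univ, Nat.card_fin]

theorem IsCycleFactor.bot_boxProd (hH : IsCycleFactor H k) :
    IsCycleFactor ((⊥ : SimpleGraph V) □ H) k := by
  refine ⟨fun ⟨x, w⟩ => ?_, fun ⟨x, w⟩ => ?_⟩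
  · rw [neighborSet_boxProd, neighborSet_bot, Set.empty_prod, Set.empty_union, Set.ncard_prod,
      Set.ncard_singleton, one_mul, hH.1]
  · have hsupp : (((⊥ : SimpleGraph V) □ H).connectedComponentMk (x, w)).supp =
        {x} ×ˢ (H.connectedComponentMk w).supp := by
      ext ⟨y, v⟩
      simp only [ConnectedComponent.mem_supp_iff, ConnectedComponent.eq, reachable_boxProd,
        reachable_bot, Set.mem_prod, Set.mem_singleton_iff]
    rw [hsupp, Set.ncard_prod, Set.ncard_singleton, one_mul, hH.2]

end CycleFactors

section Decompositions

variable {V W ι κ : Type*} {G G' : SimpleGraph V} {m n α β α' β' : ℕ}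

/-- The graphs `F i` partition the edges of `G`; `IsDecompOn` is the case of an initial
segment of `ℕ` as index set. -/
def IsDecomposition (G : SimpleGraph V) (F : ι → SimpleGraph V) : Prop :=
  (∀ i, F i ≤ G) ∧ ∀ a b, G.Adj a b → ∃! i, (F i).Adj a b

theorem IsDecomposition.comp_equiv {F : ι → SimpleGraph V} (hF : IsDecomposition G F)
    (e : κ ≃ ι) : IsDecomposition G (F ∘ e) :=
  ⟨fun i => hF.1 (e i), fun a b hab =>
    (e.existsUnique_congr fun {_} => Iff.rfl).mpr (hF.2 a b hab)⟩

theorem IsDecomposition.sumElim {F : ι → SimpleGraph V} {F' : κ → SimpleGraph V}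
    (hF : IsDecomposition G F) (hF' : IsDecomposition G' F') (hG : Disjoint G G') :
    IsDecomposition (G ⊔ G') (Sum.elim F F') := by
  have not_both := disjoint_left.mp hG
  refine ⟨Sum.rec (fun i => le_sup_of_le_left (hF.1 i)) fun j => le_sup_of_le_right (hF'.1 j), ?_⟩
  rintro a b (hab | hab)
  · obtain ⟨i, hi, hunique⟩ := hF.2 a b hab
    refine ⟨.inl i, hi, Sum.rec (fun i' hi' => congrArg _ (hunique i' hi')) fun j hj => ?_⟩
    exact absurd (hF'.1 j hj) (not_both _ _ hab)
  · obtain ⟨j, hj, hunique⟩ := hF'.2 a b hab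
    refine ⟨.inr j, hj, Sum.rec (fun i hi => ?_) fun j' hj' => congrArg _ (hunique j' hj')⟩
    exact absurd hab (not_both _ _ (hF.1 i hi))

theorem IsDecomposition.comap {F : ι → SimpleGraph V} (hF : IsDecomposition G F) {H : SimpleGraph W}
    (φ : H ≃g G) : IsDecomposition H fun i => (F i).comap φ :=
  ⟨fun i _ _ hab => φ.map_adj_iff.mp (hF.1 i hab), fun a b hab =>
    hF.2 (φ a) (φ b) (φ.map_adj_iff.mpr hab)⟩

theorem isDecompOn_iff {F : ℕ → SimpleGraph V} {N : ℕ} :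
    IsDecompOn G F N ↔ IsDecomposition G fun i : Fin N => F i := by
  constructor
  · rintro ⟨hle, hdisj, hcover⟩
    refine ⟨fun i => hle i i.2, fun a b hab => ?_⟩
    have hmem : s(a, b) ∈ ⋃ i ∈ Set.Iio N, (F i).edgeSet := hcover ▸ hab
    simp only [Set.mem_iUnion₂, mem_edgeSet] at hmem
    obtain ⟨i, hi, hi_adj⟩ := hmem
    refine ⟨⟨i, hi⟩, hi_adj, fun j hj => Fin.ext ?_⟩
    by_contra hne
    exact Set.disjoint_left.mp (hdisj j j.2 i hi hne) (mem_edgeSet _ |>.mpr hj) hi_adj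
  · rintro ⟨hle, hunique⟩
    refine ⟨fun i hi => hle ⟨i, hi⟩, fun i hi j hj hij => Set.disjoint_left.mpr ?_, ?_⟩
    · rintro ⟨a, b⟩ hab hab'
      exact hij (Fin.mk.inj ((hunique a b (hle ⟨i, hi⟩ hab)).unique
        (y₁ := ⟨i, hi⟩) (y₂ := ⟨j, hj⟩) hab hab'))
    · ext ⟨a, b⟩
      simp only [Set.mem_iUnion₂]
      refine ⟨fun hab => ?_, fun ⟨i, hi, hab⟩ => hle ⟨i, hi⟩ hab⟩
      obtain ⟨i, hi⟩ := (hunique a b hab).exists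
      exact ⟨i, i.2, hi⟩

theorem isHWGraph_iff : IsHWGraph G m n α β ↔ ∃ F : Fin α ⊕ Fin β → SimpleGraph V,
    IsDecomposition G F ∧ (∀ i, IsCycleFactor (F (.inl i)) m) ∧
      ∀ j, IsCycleFactor (F (.inr j)) n := by
  constructor
  · rintro ⟨F, hF, hm, hn⟩
    exact ⟨_, (isDecompOn_iff.mp hF).comp_equiv finSumFinEquiv, fun i => hm i i.2,
      fun j => hn (α + j) (Nat.le_add_right α j) (Nat.add_lt_add_left j.2 α)⟩
  · rintro ⟨F, hF, hm, hn⟩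
    let F' (i : ℕ) : SimpleGraph V :=
      if hi : i < α + β then F (finSumFinEquiv.symm ⟨i, hi⟩) else ⊥
    have hF' (s : Fin α ⊕ Fin β) : F' (finSumFinEquiv s) = F s := by simp [F']
    refine ⟨F', isDecompOn_iff.mpr ?_, fun i hi => ?_, fun i hα hβ => ?_⟩
    · convert hF.comp_equiv finSumFinEquiv.symm with i
      simpa using hF' (finSumFinEquiv.symm i)
    · simpa using (hF' (.inl ⟨i, hi⟩)) ▸ hm ⟨i, hi⟩
    · have := (hF' (.inr ⟨i - α, by lia⟩)) ▸ hn ⟨i - α, by lia⟩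
      simpa [Nat.add_sub_cancel' hα] using this

theorem isHWGraph_of_fintype [Fintype ι] [Fintype κ] {F : ι ⊕ κ → SimpleGraph V}
    (hF : IsDecomposition G F) (hm : ∀ i, IsCycleFactor (F (.inl i)) m)
    (hn : ∀ j, IsCycleFactor (F (.inr j)) n) :
    IsHWGraph G m n (Fintype.card ι) (Fintype.card κ) :=
  isHWGraph_iff.mpr ⟨_, hF.comp_equiv
    (Equiv.sumCongr (Fintype.equivFin ι).symm (Fintype.equivFin κ).symm), fun _ => hm _,
    fun _ => hn _⟩

theorem IsHWGraph.sup (hG : IsHWGraph G m n α β) (hG' : IsHWGraph G' m n α' β')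
    (hdisj : Disjoint G G') : IsHWGraph (G ⊔ G') m n (α + α') (β + β') := by
  obtain ⟨F, hF, hm, hn⟩ := isHWGraph_iff.mp hG
  obtain ⟨F', hF', hm', hn'⟩ := isHWGraph_iff.mp hG'
  have hsum := (hF.sumElim hF' hdisj).comp_equiv
    (Equiv.sumSumSumComm (Fin α) (Fin α') (Fin β) (Fin β'))
  simpa only [Fintype.card_sum, Fintype.card_fin] using
    isHWGraph_of_fintype hsum (Sum.rec hm hm') (Sum.rec hn hn')

theorem IsHWGraph.of_iso (hG : IsHWGraph G m n α β) {H : SimpleGraph W} (φ : H ≃g G) :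
    IsHWGraph H m n α β := by
  obtain ⟨F, hF, hm, hn⟩ := isHWGraph_iff.mp hG
  exact isHWGraph_iff.mpr ⟨_, hF.comap φ,
    fun i => (hm i).of_iso (Iso.comap φ.toEquiv _).symm,
    fun j => (hn j).of_iso (Iso.comap φ.toEquiv _).symm⟩

end Decompositions

section Cayley

variable {Γ Δ : Type*} [AddGroup Γ] [AddGroup Δ] {S T : Set Γ} {m n α β α' β' u g : ℕ}

theorem cayley_adj {a b : Γ} : (cayley Γ S).Adj a b ↔ a ≠ b ∧ (a - b ∈ S ∨ b - a ∈ S) :=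
  Iff.rfl

theorem IsHWGraph.cayley_union (hS : IsHWGraph (cayley Γ S) m n α β)
    (hT : IsHWGraph (cayley Γ T) m n α' β') (hST : ∀ d ∈ S, d ∉ T ∧ -d ∉ T) :
    IsHWGraph (cayley Γ (S ∪ T)) m n (α + α') (β + β') := by
  have hsup : cayley Γ (S ∪ T) = cayley Γ S ⊔ cayley Γ T := by
    ext a b
    simp only [sup_adj, cayley_adj, Set.mem_union]
    tauto
  have hdisj : Disjoint (cayley Γ S) (cayley Γ T) := by
    refine disjoint_left.mpr fun a b hab hab' => ?_
    rcases hab.2 with hd | hd <;> obtain ⟨hd_pos, hd_neg⟩ := hST _ hd <;>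
      rw [neg_sub] at hd_neg
    · exact hab'.2.elim hd_pos hd_neg
    · exact hab'.2.elim hd_neg hd_pos
  rw [hsup]
  exact hS.sup hT hdisj

theorem cayley_singleton_adj {z : Γ} (hz : z ≠ 0) (hzz : z + z = 0) {a b : Γ} :
    (cayley Γ {z}).Adj a b ↔ a - b = z := by
  have hswap : b - a = z ↔ a - b = z := by
    rw [← neg_sub, neg_eq_iff_eq_neg, neg_eq_of_add_eq_zero_left hzz]
  have hne : a - b = z → a ≠ b := fun hd => sub_ne_zero.mp (hd ▸ hz)
  rw [cayley_adj, Set.mem_singleton_iff, Set.mem_singleton_iff, hswap, or_self,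
    and_iff_right_of_imp hne]

theorem isOneFactor_cayley_singleton {z : Γ} (hz : z ≠ 0) (hzz : z + z = 0) :
    IsOneFactor (cayley Γ {z}) := by
  intro a
  have hset : (cayley Γ {z}).neighborSet a = {-z + a} := by
    ext b
    rw [mem_neighborSet, cayley_singleton_adj hz hzz, sub_eq_iff_eq_add, eq_comm,
      ← eq_neg_add_iff_add_eq, Set.mem_singleton_iff]
  rw [hset, Set.ncard_singleton]

theorem hwMultipartite_of_fibers {V : Type*} [Finite V] {p : V → Fin u}
    (hp : ∀ i, Nat.card {v // p v = i} = g) {I : SimpleGraph V} (hodd : Odd (g * (u - 1)))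
    (hI : IsOneFactor I) (h : IsHWGraph ((⊤ : SimpleGraph (Fin u)).comap p \ I) m n α β) :
    HWMultipartite u g m n α β := by
  let e : V ≃ Fin u × Fin g := (Equiv.sigmaFiberEquiv p).symm.trans <|
    (Equiv.sigmaCongrRight fun i => Finite.equivFinOfCardEq (hp i)).trans (Equiv.sigmaEquivProd _ _)
  have he (v : V) : (e v).1 = p v := rfl
  let φ : (⊤ : SimpleGraph (Fin u)).comap p \ I ≃g Kpartite u g \ I.map e :=
    { e with
      map_rel_iff' := fun {a b} => by
        have hne : p a ≠ p b → e a ≠ e b := fun hab heq => hab (congrArg Prod.fst heq)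
        have hI_adj : (I.map e).Adj (e a) (e b) ↔ I.Adj a b := (Iso.map e I).map_adj_iff
        simp only [sdiff_adj, Kpartite, fromRel_adj, he, comap_adj, top_adj, hI_adj]
        tauto }
  exact ⟨I.map e, absurd hodd, fun _ => hI.of_iso (Iso.map e I), h.of_iso φ.symm⟩

theorem hwMultipartite_of_cayley [Finite Γ] [Finite Δ] {π : Γ →+ Δ} {z : Γ}
    (hΔ : Nat.card Δ = u) (hπ : ∀ δ, Nat.card {a // π a = δ} = g) (hodd : Odd (g * (u - 1)))
    (hz : z ≠ 0) (hzz : z + z = 0) (hS : ∀ d, d ∈ S ∨ -d ∈ S ↔ π d ≠ 0 ∧ d ≠ z)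
    (h : IsHWGraph (cayley Γ S) m n α β) : HWMultipartite u g m n α β := by
  let e : Δ ≃ Fin u := Finite.equivFinOfCardEq hΔ
  have hfiber (i : Fin u) : Nat.card {a // e (π a) = i} = g := by
    simpa only [Equiv.eq_symm_apply] using hπ (e.symm i)
  refine hwMultipartite_of_fibers hfiber hodd (isOneFactor_cayley_singleton hz hzz) ?_
  convert h using 1
  ext a b
  have hab := hS (a - b)
  have hπ_ne : π a ≠ π b → a ≠ b := fun hne heq => hne (congrArg π heq)
  rw [neg_sub, map_sub, sub_ne_zero] at hab
  simp only [sdiff_adj, comap_adj, top_adj, cayley_singleton_adj hz hzz, cayley_adj,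
    e.injective.ne_iff, hab]
  tauto

end Cayley

section Development

variable {Γ Q J L : Type*} [AddCommGroup Γ] [AddCommGroup Q] {k : ℕ}

/-- The development of a graph `B`, drawn on the group `Γ` by `c`, over a fibre of the
homomorphism `π`: the union of the translates `c + h` of `B` with `π h = x`. -/
def development (π : Γ →+ Q) (B : SimpleGraph J) (c : J → Γ) (x : Q) : SimpleGraph Γ :=
  ((⊥ : SimpleGraph (π ⁻¹' {x})) □ B).map fun p => p.1 + c p.2

variable {π : Γ →+ Q} {B : SimpleGraph J} {c : J → Γ} {x : Q}

theorem development_adj (hc : Function.Injective c) {a b : Γ} :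
    (development π B c x).Adj a b ↔
      ∃ u v, B.Adj u v ∧ π (a - c u) = x ∧ c v - c u = b - a := by
  simp only [development, map_adj', boxProd_adj, bot_adj, false_and, false_or, Prod.exists]
  constructor
  · rintro ⟨-, ⟨h, hx⟩, u, h', v, ⟨huv, rfl⟩, rfl, rfl⟩
    refine ⟨u, v, huv, ?_, by abel⟩
    simpa using hx
  · rintro ⟨u, v, huv, hx, hd⟩
    refine ⟨fun hab => huv.ne (hc ?_), ⟨a - c u, hx⟩, u, ⟨a - c u, hx⟩, v, ⟨huv, rfl⟩, ?_, ?_⟩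
    · rw [hab, sub_self, sub_eq_zero] at hd
      exact hd.symm
    · exact sub_add_cancel a (c u)
    · rw [sub_add_eq_add_sub, add_sub_assoc, hd, add_sub_cancel]

theorem isCycleFactor_development (hB : IsCycleFactor B k) (hc : Function.Bijective (π ∘ c)) :
    IsCycleFactor (development π B c x) k := by
  have hbij : Function.Bijective fun p : π ⁻¹' {x} × J => (p.1 : Γ) + c p.2 := by
    constructor
    · rintro ⟨⟨h, hh⟩, u⟩ ⟨⟨h', hh'⟩, u'⟩ heq
      simp only [Set.mem_preimage, Set.mem_singleton_iff] at hh hh' heq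
      have hπ := congrArg π heq
      rw [map_add, map_add, hh, hh'] at hπ
      obtain rfl : u = u' := hc.1 (add_left_cancel hπ)
      exact Prod.ext (Subtype.ext (add_right_cancel heq)) rfl
    · intro a
      obtain ⟨u, hu⟩ := hc.2 (π a - x)
      refine ⟨(⟨a - c u, ?_⟩, u), sub_add_cancel a (c u)⟩
      rw [Set.mem_preimage, map_sub, show π (c u) = π a - x from hu, sub_sub_cancel,
        Set.mem_singleton_iff]
  exact hB.bot_boxProd.of_iso (Iso.map (Equiv.ofBijective _ hbij) _)

/-- A family of drawings `c l` of `B` on `Γ`, each of them a transversal of `π`, whose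
developments over the fibres `x ∈ X` use every difference `d ∈ S` exactly once in each class of
`π`: each `q : Q` is the class of the tail of exactly one arc with difference `d`. Only one of `d`
and `-d` is listed in `S`. -/
structure IsDifferenceFamily (π : Γ →+ Q) (X : Finset Q) (B : SimpleGraph J) (c : L → J → Γ)
    (S : Set Γ) : Prop where
  bijective : ∀ l, Function.Bijective (π ∘ c l)
  sub_mem : ∀ l u v, B.Adj u v → c l u - c l v ∈ S ∨ c l v - c l u ∈ S
  existsUnique : ∀ d ∈ S, ∀ q, ∃! t : L × J × J,
    c t.1 t.2.2 - c t.1 t.2.1 = d ∧ B.Adj t.2.1 t.2.2 ∧ q - π (c t.1 t.2.1) ∈ X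

namespace IsDifferenceFamily

variable {X : Finset Q} {c : L → J → Γ} {S : Set Γ}

theorem injective (hc : IsDifferenceFamily π X B c S) (l : L) : Function.Injective (c l) :=
  (hc.bijective l).1.of_comp

theorem existsUnique_development_adj (hc : IsDifferenceFamily π X B c S) {a b : Γ}
    (hab : b - a ∈ S) : ∃! i : L × X, (development π B (c i.1) i.2).Adj a b := by
  obtain ⟨⟨l, u, v⟩, ⟨hd, huv, hx⟩, hunique⟩ := hc.existsUnique (b - a) hab (π a)
  rw [← map_sub] at hx
  refine ⟨(l, ⟨π (a - c l u), hx⟩),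
    (development_adj (hc.injective l)).mpr ⟨u, v, huv, rfl, hd⟩, ?_⟩
  rintro ⟨l', x, hx'⟩ hadj
  obtain ⟨u', v', huv', rfl, hd'⟩ := (development_adj (hc.injective l')).mp hadj
  obtain ⟨⟩ := hunique (l', u', v') ⟨hd', huv', by rwa [← map_sub]⟩
  rfl

theorem isDecomposition (hc : IsDifferenceFamily π X B c S) :
    IsDecomposition (cayley Γ S) fun i : L × X => development π B (c i.1) i.2 := by
  refine ⟨fun i a b hab => cayley_adj.mpr ⟨hab.ne, ?_⟩, fun a b hab => ?_⟩
  · obtain ⟨u, v, huv, -, hd⟩ := (development_adj (hc.injective i.1)).mp hab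
    have := hc.sub_mem i.1 u v huv
    rwa [← neg_sub, hd, neg_sub] at this
  · rcases (cayley_adj.mp hab).2 with hS | hS
    · simpa only [adj_comm] using hc.existsUnique_development_adj hS
    · exact hc.existsUnique_development_adj hS

variable [Fintype L]

theorem isHWGraph_left (hc : IsDifferenceFamily π X B c S) (hB : IsCycleFactor B k) (n : ℕ) :
    IsHWGraph (cayley Γ S) k n (Fintype.card L * X.card) 0 := by
  have hdec := hc.isDecomposition.comp_equiv (Equiv.sumEmpty (L × X) Empty)
  simpa only [Fintype.card_prod, Fintype.card_coe, Fintype.card_empty] using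
    isHWGraph_of_fintype hdec (fun i => isCycleFactor_development hB (hc.bijective i.1))
      (nofun : ∀ _ : Empty, _)

theorem isHWGraph_right (hc : IsDifferenceFamily π X B c S) (hB : IsCycleFactor B k) (m : ℕ) :
    IsHWGraph (cayley Γ S) m k 0 (Fintype.card L * X.card) := by
  have hdec := hc.isDecomposition.comp_equiv (Equiv.emptySum Empty (L × X))
  simpa only [Fintype.card_prod, Fintype.card_coe, Fintype.card_empty] using
    isHWGraph_of_fintype hdec (nofun : ∀ _ : Empty, _)
      (fun i => isCycleFactor_development hB (hc.bijective i.1))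

end IsDifferenceFamily

end Development

section Decidability

instance decidableRelBoxProd {V W : Type*} [DecidableEq V] [DecidableEq W] (G : SimpleGraph V)
    (H : SimpleGraph W) [DecidableRel G.Adj] [DecidableRel H.Adj] : DecidableRel (G □ H).Adj :=
  fun _ _ => inferInstanceAs (Decidable (_ ∨ _))

variable {Γ Q J L : Type*} [AddCommGroup Γ] [AddCommGroup Q] [DecidableEq Γ] [DecidableEq Q]
  [DecidableEq J] [Fintype Q] [Fintype J] [Fintype L]

instance IsDifferenceFamily.decidable {π : Γ →+ Q} {X : Finset Q} {B : SimpleGraph J}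
    {c : L → J → Γ} {S : Finset Γ} [DecidableRel B.Adj] :
    Decidable (IsDifferenceFamily π X B c S) :=
  decidable_of_iff ((∀ l, Function.Bijective (π ∘ c l)) ∧
      (∀ l u v, B.Adj u v → c l u - c l v ∈ S ∨ c l v - c l u ∈ S) ∧
      ∀ d ∈ S, ∀ q, Finset.card {t : L × J × J | c t.1 t.2.2 - c t.1 t.2.1 = d ∧
        B.Adj t.2.1 t.2.2 ∧ q - π (c t.1 t.2.1) ∈ X} = 1)
    ⟨fun ⟨hbij, hsub, hcard⟩ => ⟨hbij, hsub, fun d hd q =>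
        (Fintype.existsUnique_iff_card_one _).mpr (hcard d hd q)⟩,
      fun hc => ⟨hc.bijective, hc.sub_mem, fun d hd q =>
        (Fintype.existsUnique_iff_card_one _).mp (hc.existsUnique d hd q)⟩⟩

end Decidability

section OrderSixty

/-- Reduction modulo a divisor `s` of `n`, along which base cycles are developed. -/
abbrev residue {n s : ℕ} (hs : s ∣ n) : ZMod n →+ ZMod s :=
  (ZMod.castHom hs (ZMod s)).toAddMonoidHom

/-- The disjoint union of `r` cycles of length `k`, on which families of base cycles are drawn. -/
abbrev disjointCycles (r k : ℕ) : SimpleGraph (Fin r × Fin k) :=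
  (⊥ : SimpleGraph (Fin r)) □ cycleGraph k

theorem isCycleFactor_disjointCycles (r : ℕ) {k : ℕ} (hk : 3 ≤ k) :
    IsCycleFactor (disjointCycles r k) k :=
  (isCycleFactor_cycleGraph hk).bot_boxProd

/-- Six differences, up to sign, whose Cayley graph has both a `C₃`- and a `C₅`-factorization. -/
def hexadA : Finset (ZMod 60) := {1, 7, 10, 17, 25, 26}

/-- A second such set of six differences. -/
def hexadB : Finset (ZMod 60) := {2, 5, 11, 13, 14, 19}

/-- Five differences, up to sign, whose Cayley graph has a `C₅`-factorization. With their
negatives, `hexadA`, `hexadB`, `pentadC` and `pentadD` partition the set of differences that are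
neither divisible by 4 nor equal to 30. -/
def pentadC : Finset (ZMod 60) := {9, 21, 22, 23, 29}

/-- A second such set of five differences. -/
def pentadD : Finset (ZMod 60) := {3, 6, 15, 18, 27}

/-- Two base triangles for `hexadA`, each a transversal modulo 3. -/
def trianglesA : Fin 2 → Fin 1 → Fin 3 → ZMod 60 :=
  ![![![0, 1, 26]], ![![0, 7, 17]]]

/-- Two base triangles for `hexadB`, each a transversal modulo 3. -/
def trianglesB : Fin 2 → Fin 1 → Fin 3 → ZMod 60 :=
  ![![![0, 2, 13]], ![![0, 5, 19]]]

/-- Two triples of base pentagons for `hexadA`, each triple a transversal modulo 15. -/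
def pentagonsA : Fin 2 → Fin 3 → Fin 5 → ZMod 60 :=
  ![![![0, 7, 8, 33, 34], ![1, 27, 2, 9, 44], ![5, 40, 41, 51, 58]],
    ![![0, 10, 9, 43, 26], ![1, 2, 19, 29, 36], ![3, 20, 37, 27, 53]]]

/-- Two triples of base pentagons for `hexadB`, each triple a transversal modulo 15. -/
def pentagonsB : Fin 2 → Fin 3 → Fin 5 → ZMod 60 :=
  ![![![0, 11, 6, 47, 58], ![1, 3, 22, 9, 20], ![4, 23, 10, 57, 59]],
    ![![0, 2, 16, 14, 55], ![3, 8, 21, 35, 49], ![7, 12, 58, 9, 56]]]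

/-- A base pentagon for `pentadC`, a transversal modulo 5. -/
def pentagonsC : Fin 1 → Fin 1 → Fin 5 → ZMod 60 :=
  ![![![0, 38, 29, 52, 21]]]

/-- Four base pentagons for `pentadD`, together a transversal modulo 20. -/
def pentagonsD : Fin 1 → Fin 4 → Fin 5 → ZMod 60 :=
  ![![![0, 27, 45, 51, 18], ![1, 34, 37, 22, 19], ![3, 48, 33, 36, 9], ![4, 46, 52, 55, 10]]]

theorem isDifferenceFamily_trianglesA :
    IsDifferenceFamily (residue (by decide : 3 ∣ 60)) Finset.univ (disjointCycles 1 3)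
      (fun l => (trianglesA l).uncurry) hexadA := by
  decide +kernel

theorem isDifferenceFamily_trianglesB :
    IsDifferenceFamily (residue (by decide : 3 ∣ 60)) Finset.univ (disjointCycles 1 3)
      (fun l => (trianglesB l).uncurry) hexadB := by
  decide +kernel

theorem isDifferenceFamily_pentagonsA :
    IsDifferenceFamily (residue (by decide : 15 ∣ 60)) {0, 5, 10} (disjointCycles 3 5)
      (fun l => (pentagonsA l).uncurry) hexadA := by
  decide +kernel

theorem isDifferenceFamily_pentagonsB :
    IsDifferenceFamily (residue (by decide : 15 ∣ 60)) {0, 5, 10} (disjointCycles 3 5)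
      (fun l => (pentagonsB l).uncurry) hexadB := by
  decide +kernel

theorem isDifferenceFamily_pentagonsC :
    IsDifferenceFamily (residue (by decide : 5 ∣ 60)) Finset.univ (disjointCycles 1 5)
      (fun l => (pentagonsC l).uncurry) pentadC := by
  decide +kernel

theorem isDifferenceFamily_pentagonsD :
    IsDifferenceFamily (residue (by decide : 20 ∣ 60)) {0, 4, 8, 12, 16} (disjointCycles 4 5)
      (fun l => (pentagonsD l).uncurry) pentadD := by
  decide +kernel

theorem isHWGraph_hexadA_triangles : IsHWGraph (cayley (ZMod 60) hexadA) 3 5 6 0 :=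
  isDifferenceFamily_trianglesA.isHWGraph_left (isCycleFactor_disjointCycles 1 (by decide)) 5

theorem isHWGraph_hexadB_triangles : IsHWGraph (cayley (ZMod 60) hexadB) 3 5 6 0 :=
  isDifferenceFamily_trianglesB.isHWGraph_left (isCycleFactor_disjointCycles 1 (by decide)) 5

theorem isHWGraph_hexadA_pentagons : IsHWGraph (cayley (ZMod 60) hexadA) 3 5 0 6 :=
  isDifferenceFamily_pentagonsA.isHWGraph_right (isCycleFactor_disjointCycles 3 (by decide)) 3

theorem isHWGraph_hexadB_pentagons : IsHWGraph (cayley (ZMod 60) hexadB) 3 5 0 6 :=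
  isDifferenceFamily_pentagonsB.isHWGraph_right (isCycleFactor_disjointCycles 3 (by decide)) 3

theorem isHWGraph_pentads : IsHWGraph (cayley (ZMod 60) (pentadC ∪ pentadD)) 3 5 0 10 :=
  have hC : IsHWGraph (cayley (ZMod 60) pentadC) 3 5 0 5 :=
    isDifferenceFamily_pentagonsC.isHWGraph_right (isCycleFactor_disjointCycles 1 (by decide)) 3
  have hD : IsHWGraph (cayley (ZMod 60) pentadD) 3 5 0 5 :=
    isDifferenceFamily_pentagonsD.isHWGraph_right (isCycleFactor_disjointCycles 4 (by decide)) 3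
  hC.cayley_union hD (by simp only [Finset.mem_coe]; decide)

theorem hwMultipartite_of_hexads {α β α' β' : ℕ}
    (hA : IsHWGraph (cayley (ZMod 60) hexadA) 3 5 α β)
    (hB : IsHWGraph (cayley (ZMod 60) hexadB) 3 5 α' β') :
    HWMultipartite 4 15 3 5 (α + α') (β + β' + 10) := by
  have hexads := hA.cayley_union hB (by simp only [Finset.mem_coe]; decide)
  have all := hexads.cayley_union isHWGraph_pentads
    (by simp only [Set.mem_union, Finset.mem_coe]; decide)
  have fibers : ∀ δ, Nat.card {a // residue (by decide : 4 ∣ 60) a = δ} = 15 := by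
    simp only [Nat.card_eq_fintype_card]
    decide +kernel
  refine hwMultipartite_of_cayley (z := 30) (Nat.card_zmod 4) fibers (by decide) (by decide)
    (by decide) ?_ all
  simp only [Set.mem_union, Finset.mem_coe]
  decide +kernel

end OrderSixty

theorem stmt_14 : HWMultipartite 4 15 3 5 0 22 ∧ HWMultipartite 4 15 3 5 6 16 ∧
    HWMultipartite 4 15 3 5 12 10 := by
  refine ⟨?_, ?_, ?_⟩
  · exact hwMultipartite_of_hexads isHWGraph_hexadA_pentagons isHWGraph_hexadB_pentagons
  · exact hwMultipartite_of_hexads isHWGraph_hexadA_triangles isHWGraph_hexadB_pentagons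
  · exact hwMultipartite_of_hexads isHWGraph_hexadA_triangles isHWGraph_hexadB_triangles
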